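/- For all nonnegative integers a and b, T(a,b) = -(π^{2a+2b+2}/(2^{2a+2b+1}(2a+1)!)) · Σ_{n=0}^{∞} ζ(2n)(2n+2a)! / (2^{2n} (2n+2a+2b+2)!), where T(a,b) := t({2}^a, 3, {2}^b) and ζ(2n) denotes the Riemann zeta function at 2n (with ζ(0) = -1/2). -/

import Mathlib

/-!
Both sides equal the integral
`I = ∫₀^{π/2} x^{2a+1}/(2a+1)! · (π/2 - x)^{2b+1}/(2b+1)! · cot x dx` (`cotIntegral`).

For the left side, let `e_a(k)` be the elementary symmetric function of degree `a` in the numbers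
`1/(2j+1)²`, `j < k`, and let `c_k = binom(2k,k)/(4^k (2k+1))`, the coefficients of `arcsin`. The
expansion of the powers of the arcsine reads
`x^{2a+1}/(2a+1)! = ∑_k e_a(k) c_k sin^{2k+1} x` for `0 ≤ x < π/2` (`hasSum_sin_pow`). Two
differentiations carry the `K`-th remainder for `a` to the previous remainder for `a - 1`, up to an
error term that tends to `0`; bounding the second derivative and integrating back twice gives the
convergence by induction on `a`. Inserting the expansion into `I` and integrating by parts leaves
the moments `∫₀^{π/2} y^{2b}/(2b)! cos^{2k+1} y dy`. Suitably normalised (`normMoment`), these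
telescope in `k` with increments given by the moments for `b - 1`, so they are the sums of
`∏ 1/(2j_i+1)²` over `k < j_1 < ⋯ < j_b` (`nestedSum_replicate_two`). Hence
`I = ∑_k e_a(k) (2k+1)⁻³ ∑_{k < j_1 < ⋯ < j_b} ∏ 1/(2j_i+1)²`, which is `T(a,b)` split according
to the index `k` carrying the exponent `3` (`T_eq_cotIntegral`). The rearrangement of the multiple
sum is carried out in `ℝ≥0∞`, where no summability has to be checked.

For the right side, Euler's partial fraction expansion of the cotangent gives
`x cot x = -2 ∑_n ζ(2n) (x/π)^{2n}` (`hasSum_mulCot`), and integrating term by term against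
`x^{2a} (π/2 - x)^{2b+1}` by means of the beta integral yields the series (`cotIntegral_hasSum`).
-/


open Real Finset

/-- The multiple t-value `t(s₁,…,s_r) = ∑_{1 ≤ k₁ < ⋯ < k_r} ∏ 1/(2k_i-1)^{s_i}`,
encoded via strictly increasing functions `f : Fin r → ℕ` with `k_i = f i + 1`,
so `2k_i - 1 = 2 f i + 1`. -/
noncomputable def mtv (s : List ℕ) : ℝ :=
  ∑' f : {f : Fin s.length → ℕ // StrictMono f},
    ∏ i, (1 : ℝ) / ((2 * f.1 i + 1 : ℕ) : ℝ) ^ (s.get i)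

/-- `T(a,b) = t({2}^a, 3, {2}^b)`. -/
noncomputable def T (a b : ℕ) : ℝ :=
  mtv (List.replicate a 2 ++ 3 :: List.replicate b 2)

section

open Filter Topology
open scoped ENNReal

/-! ### Multiple sums as iterated sums -/

/-- The number `1/(2k+1)^s` as an extended nonnegative real. -/
noncomputable def oddRecip (s k : ℕ) : ℝ≥0∞ := ENNReal.ofReal (1 / ((2 * k + 1 : ℕ) : ℝ) ^ s)

/-- The sum of `∏ 1/(2k_i+1)^{s_i}` over `m ≤ k_1 < k_2 < ⋯ < k_r`, as a sum iterated from the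
smallest index on. -/
noncomputable def nestedSum : List ℕ → ℕ → ℝ≥0∞
  | [], _ => 1
  | s :: l, m => ∑' k, if m ≤ k then oddRecip s k * nestedSum l (k + 1) else 0

open Classical in
lemma tsum_strictMono_eq_nestedSum (l : List ℕ) (m : ℕ) :
    (∑' f : Fin l.length → ℕ, if StrictMono f ∧ ∀ i, m ≤ f i then
      ∏ i, oddRecip (l.get i) (f i) else 0) = nestedSum l m := by
  induction l generalizing m with
  | nil =>
    change (∑' f : Fin 0 → ℕ, _) = _
    rw [tsum_eq_single (default : Fin 0 → ℕ)]
    · exact (if_pos ⟨fun i => i.elim0, fun i => i.elim0⟩).trans Finset.prod_empty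
    · intro f hf
      exact absurd (Subsingleton.elim _ _) hf
  | cons s l ih =>
    rw [nestedSum]
    change (∑' f : Fin (l.length + 1) → ℕ, _) = _
    rw [← (Fin.consEquiv (fun _ : Fin (l.length + 1) => ℕ)).tsum_eq, ENNReal.tsum_prod']
    refine tsum_congr fun k => ?_
    rw [← ih]
    split_ifs with hk
    · rw [← ENNReal.tsum_mul_left]
      refine tsum_congr fun g => ?_
      have hiff : (StrictMono (Fin.cons k g : Fin (l.length + 1) → ℕ) ∧
          ∀ i, m ≤ (Fin.cons k g : Fin (l.length + 1) → ℕ) i) ↔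
          (StrictMono g ∧ ∀ i, k + 1 ≤ g i) := by
        rw [Fin.strictMono_cons, Fin.forall_fin_succ]
        simp only [Fin.cons_zero, Fin.cons_succ]
        constructor
        · rintro ⟨⟨h1, h2⟩, -⟩
          exact ⟨h2, fun i => h1 i⟩
        · rintro ⟨h1, h2⟩
          exact ⟨⟨fun i => h2 i, h1⟩, hk, fun i => hk.trans (Nat.le_of_succ_le (h2 i))⟩
      by_cases hg : StrictMono g ∧ ∀ i, k + 1 ≤ g i
      · rw [if_pos hg]
        exact (if_pos (hiff.2 hg)).trans (Fin.prod_univ_succ _)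
      · rw [if_neg hg, mul_zero]
        exact if_neg (fun h => hg (hiff.1 h))
    · rw [ENNReal.tsum_eq_zero]
      intro g
      rw [if_neg]
      rintro ⟨-, h⟩
      exact hk (by simpa [Fin.consEquiv] using h 0)

lemma mtv_eq_nestedSum (l : List ℕ) : mtv l = (nestedSum l 0).toReal := by
  classical
  rw [← tsum_strictMono_eq_nestedSum, mtv]
  have h : (∑' f : Fin l.length → ℕ, if StrictMono f ∧ ∀ i, 0 ≤ f i then
      ∏ i, oddRecip (l.get i) (f i) else 0) =
      ∑' f : {f : Fin l.length → ℕ // StrictMono f}, ∏ i, oddRecip (l.get i) (f.1 i) := by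
    refine Eq.trans (tsum_congr fun f => ?_) (tsum_subtype {f : Fin l.length → ℕ | StrictMono f}
      (fun f => ∏ i, oddRecip (l.get i) (f i))).symm
    simp [Set.indicator_apply]
  rw [h, ENNReal.tsum_toReal_eq]
  · refine tsum_congr fun f => ?_
    rw [ENNReal.toReal_prod]
    refine Finset.prod_congr rfl fun i _ => ?_
    rw [oddRecip, ENNReal.toReal_ofReal (by positivity)]
  · intro f
    exact ENNReal.prod_ne_top fun i _ => ENNReal.ofReal_ne_top

/-- The elementary symmetric function `e_a(k)` of degree `a` in the numbers `1/(2j+1)²`, `j < k`,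
recursively in the largest index `j` that occurs. -/
noncomputable def elemOdd : ℕ → ℕ → ℝ
  | 0, _ => 1
  | a + 1, k => ∑ j ∈ Finset.range k, elemOdd a j * (1 / ((2 * j + 1 : ℕ) : ℝ) ^ 2)

lemma elemOdd_nonneg (a k : ℕ) : 0 ≤ elemOdd a k := by
  induction a generalizing k with
  | zero => simp [elemOdd]
  | succ a ih => exact Finset.sum_nonneg fun j _ => mul_nonneg (ih j) (by positivity)

/-- The sum of `φ k` over all `k ≥ m`. -/
noncomputable def tailSum (φ : ℕ → ℝ≥0∞) (m : ℕ) : ℝ≥0∞ := ∑' k, if m ≤ k then φ k else 0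

/-- If `φ k` is the part of a nested sum whose smallest index is `k`, then `prependTwo φ k` is that
part of the sum with one more exponent `2` at the front. -/
noncomputable def prependTwo (φ : ℕ → ℝ≥0∞) (k : ℕ) : ℝ≥0∞ := oddRecip 2 k * tailSum φ (k + 1)

lemma nestedSum_replicate_append (a s : ℕ) (l : List ℕ) (m : ℕ) :
    nestedSum (List.replicate a 2 ++ s :: l) m =
      tailSum (prependTwo^[a] fun k => oddRecip s k * nestedSum l (k + 1)) m := by
  induction a generalizing m with
  | zero => rfl
  | succ a ih =>
    rw [Function.iterate_succ_apply', List.replicate_succ, List.cons_append, nestedSum]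
    simp only [ih]
    rfl

/-- Interchanging the two summations moves an exponent `2` from the nested sum into the
elementary symmetric function. -/
lemma tsum_elemOdd_prependTwo (a : ℕ) (φ : ℕ → ℝ≥0∞) :
    ∑' k, ENNReal.ofReal (elemOdd a k) * prependTwo φ k =
      ∑' k, ENNReal.ofReal (elemOdd (a + 1) k) * φ k := by
  simp only [prependTwo, tailSum, ← ENNReal.tsum_mul_left]
  rw [ENNReal.tsum_comm]
  refine tsum_congr fun k => ?_
  rw [elemOdd, ENNReal.ofReal_sum_of_nonneg
    (fun j _ => mul_nonneg (elemOdd_nonneg a j) (by positivity)), Finset.sum_mul,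
    tsum_eq_sum (s := Finset.range k)]
  · refine Finset.sum_congr rfl fun j hj => ?_
    rw [if_pos (Nat.succ_le_of_lt (Finset.mem_range.mp hj)), ENNReal.ofReal_mul (elemOdd_nonneg a j), oddRecip, mul_assoc]
  · intro j hj
    rw [if_neg (fun h => hj (Finset.mem_range.mpr (Nat.lt_of_succ_le h)))]
    simp

/-- A multiple sum with leading exponents `{2}^a, s`, split according to the index `k` that carries
`s`. -/
lemma nestedSum_eq_tsum_elemOdd (a s : ℕ) (l : List ℕ) :
    nestedSum (List.replicate a 2 ++ s :: l) 0 =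
      ∑' k, ENNReal.ofReal (elemOdd a k) * (oddRecip s k * nestedSum l (k + 1)) := by
  -- The degree `j` has to vary, since each step raises it by one.
  have key : ∀ (φ : ℕ → ℝ≥0∞) (j : ℕ), ∑' k, ENNReal.ofReal (elemOdd j k) * prependTwo^[a] φ k =
      ∑' k, ENNReal.ofReal (elemOdd (j + a) k) * φ k := by
    induction a with
    | zero => intro φ j; rfl
    | succ a ih =>
      intro φ j
      rw [Function.iterate_succ_apply, ih (prependTwo φ), tsum_elemOdd_prependTwo]
      rfl
  rw [nestedSum_replicate_append, tailSum]
  have := key (fun k => oddRecip s k * nestedSum l (k + 1)) 0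
  simpa [elemOdd] using this

lemma tailSum_eq_tsum_add (φ : ℕ → ℝ≥0∞) (m : ℕ) : tailSum φ m = ∑' i, φ (m + i) := by
  rw [tailSum, ← Function.Injective.tsum_eq (add_right_injective m)]
  · simp
  · intro k hk
    have : m ≤ k := by
      by_contra h
      simp [h] at hk
    exact ⟨k - m, by simp; omega⟩

/-! ### Powers of the arcsine -/

/-- The arcsine coefficients `c_k = binom(2k,k)/(4^k (2k+1))`, given by their ratio recursion. -/
noncomputable def sinCoeff : ℕ → ℝ
  | 0 => 1
  | k + 1 => sinCoeff k * (2 * k + 1) ^ 2 / ((2 * k + 2) * (2 * k + 3))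

lemma sinCoeff_pos (k : ℕ) : 0 < sinCoeff k := by
  induction k with
  | zero => simp [sinCoeff]
  | succ k ih => rw [sinCoeff]; positivity

lemma sinCoeff_succ_mul (k : ℕ) :
    sinCoeff (k + 1) * ((2 * k + 2) * (2 * k + 3)) = sinCoeff k * (2 * k + 1) ^ 2 := by
  rw [sinCoeff]; field_simp

lemma sinCoeff_le_one (k : ℕ) : sinCoeff k ≤ 1 := by
  induction k with
  | zero => simp [sinCoeff]
  | succ k ih =>
    rw [sinCoeff, div_le_one (by positivity)]
    have : (0 : ℝ) ≤ k := by positivity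
    nlinarith [sinCoeff_pos k]

lemma elemOdd_le_pow (a k : ℕ) : elemOdd a k ≤ (k : ℝ) ^ a := by
  induction a generalizing k with
  | zero => simp [elemOdd]
  | succ a ih =>
    rw [elemOdd, pow_succ']
    calc _ ≤ ∑ j ∈ Finset.range k, (k : ℝ) ^ a := by
          refine Finset.sum_le_sum fun j hj => ?_
          have hjk : (j : ℝ) ≤ k := by exact_mod_cast (Finset.mem_range.mp hj).le
          have h1 : 1 / ((2 * j + 1 : ℕ) : ℝ) ^ 2 ≤ 1 := by
            rw [div_le_one (by positivity)]
            exact one_le_pow₀ (by push_cast; linarith [(Nat.cast_nonneg j : (0:ℝ) ≤ j)])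
          calc _ ≤ elemOdd a j * 1 := mul_le_mul_of_nonneg_left h1 (elemOdd_nonneg a j)
            _ ≤ (k : ℝ) ^ a := by
              rw [mul_one]
              exact (ih j).trans (pow_le_pow_left₀ (by positivity) hjk a)
      _ = _ := by simp

/-- The difference of `x^{2a+1}/(2a+1)!` and the first `K` terms of its expansion in powers of
`sin x`. -/
noncomputable def sinRem (a K : ℕ) (x : ℝ) : ℝ :=
  x ^ (2 * a + 1) / (Nat.factorial (2 * a + 1) : ℝ) -
    ∑ k ∈ Finset.range K, elemOdd a k * sinCoeff k * sin x ^ (2 * k + 1)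

/-- The derivative of `sinRem a K`; see `hasDerivAt_sinRem`. -/
noncomputable def sinRemDeriv (a K : ℕ) (x : ℝ) : ℝ :=
  x ^ (2 * a) / (Nat.factorial (2 * a) : ℝ) -
    ∑ k ∈ Finset.range K, elemOdd a k * sinCoeff k * ((2 * k + 1) * sin x ^ (2 * k) * cos x)

lemma hasDerivAt_pow_div_factorial (n : ℕ) (x : ℝ) :
    HasDerivAt (fun x : ℝ => x ^ (n + 1) / (Nat.factorial (n + 1) : ℝ))
      (x ^ n / (Nat.factorial n : ℝ)) x := by
  have h := (hasDerivAt_pow (n + 1) x).div_const (Nat.factorial (n + 1) : ℝ)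
  convert! h using 1
  have := Nat.factorial_ne_zero n
  rw [Nat.factorial_succ]
  push_cast
  field_simp

lemma hasDerivAt_sinRem (a K : ℕ) (x : ℝ) :
    HasDerivAt (sinRem a K) (sinRemDeriv a K x) x := by
  refine (hasDerivAt_pow_div_factorial (2 * a) x).sub (HasDerivAt.fun_sum fun k _ => ?_)
  have h := ((hasDerivAt_sin x).pow (2 * k + 1)).const_mul (elemOdd a k * sinCoeff k)
  convert! h using 2
  push_cast
  simp

/-- The boundary term left over when the second derivatives of the terms of the sine expansion are
summed by telescoping. -/
noncomputable def sinErr (a K : ℕ) (x : ℝ) : ℝ :=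
  elemOdd a K * sinCoeff K * (2 * K + 1) ^ 2 * sin x ^ (2 * K + 1)

/-- As the second derivative of `sin^n` is `n(n-1) sin^{n-2} - n² sin^n`, the recursion for `c_k` makes the second
derivative of a partial sum telescope to the increments of `e_a`, up to `sinErr`. -/
lemma sum_deriv_telescope (a K : ℕ) (x : ℝ) :
    ∑ k ∈ Finset.range (K + 1), elemOdd a k * sinCoeff k *
      ((2 * k + 1) * ((2 * k : ℕ) * sin x ^ (2 * k - 1) * cos x * cos x + sin x ^ (2 * k) * (-sin x)))
    = ∑ k ∈ Finset.range K, (elemOdd a (k + 1) - elemOdd a k) * (2 * k + 1) ^ 2 * sinCoeff k *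
        sin x ^ (2 * k + 1) - sinErr a K x := by
  induction K with
  | zero => simp [sinErr]
  | succ K ih =>
    rw [Finset.sum_range_succ, ih, Finset.sum_range_succ, sinErr, sinErr]
    have h2 : 2 * (K + 1) - 1 = 2 * K + 1 := by omega
    rw [h2]
    have hc : cos x * cos x = 1 - sin x ^ 2 := by rw [← cos_sq']; ring
    have h := sinCoeff_succ_mul K
    rw [mul_assoc _ (cos x) (cos x), hc]
    push_cast
    linear_combination (elemOdd a (K + 1) * sin x ^ (2 * K + 1)) * h

lemma hasDerivAt_sinRemDeriv_zero (K : ℕ) (x : ℝ) :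
    HasDerivAt (sinRemDeriv 0 (K + 1)) (sinErr 0 K x) x := by
  have h : HasDerivAt (sinRemDeriv 0 (K + 1)) (0 - ∑ k ∈ Finset.range (K + 1), elemOdd 0 k * sinCoeff k *
      ((2 * k + 1) * ((2 * k : ℕ) * sin x ^ (2 * k - 1) * cos x * cos x + sin x ^ (2 * k) * (-sin x)))) x := by
    refine HasDerivAt.sub (by simpa using hasDerivAt_const x (1:ℝ)) (HasDerivAt.fun_sum fun k _ => ?_)
    have h := ((((hasDerivAt_sin x).pow (2 * k)).mul (hasDerivAt_cos x)).const_mul ((2 * k + 1 : ℝ))).const_mul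
      (elemOdd 0 k * sinCoeff k)
    convert! h using 2
    simp [mul_assoc]
  rw [sum_deriv_telescope] at h
  simpa [elemOdd] using h

/-- The second derivative of the remainder for `a + 1` is the remainder for `a` with one term
fewer, plus the boundary term. -/
lemma hasDerivAt_sinRemDeriv_succ (a K : ℕ) (x : ℝ) :
    HasDerivAt (sinRemDeriv (a + 1) (K + 1)) (sinRem a K x + sinErr (a + 1) K x) x := by
  have h : HasDerivAt (sinRemDeriv (a + 1) (K + 1)) (x ^ (2 * a + 1) / (Nat.factorial (2 * a + 1) : ℝ) -
      ∑ k ∈ Finset.range (K + 1), elemOdd (a + 1) k * sinCoeff k *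
      ((2 * k + 1) * ((2 * k : ℕ) * sin x ^ (2 * k - 1) * cos x * cos x + sin x ^ (2 * k) * (-sin x)))) x := by
    refine HasDerivAt.sub (hasDerivAt_pow_div_factorial (2 * a + 1) x) (HasDerivAt.fun_sum fun k _ => ?_)
    have h := ((((hasDerivAt_sin x).pow (2 * k)).mul (hasDerivAt_cos x)).const_mul ((2 * k + 1 : ℝ))).const_mul
      (elemOdd (a + 1) k * sinCoeff k)
    convert! h using 2
    simp [mul_assoc]
  rw [sum_deriv_telescope] at h
  convert! h using 1
  have : ∀ k, (elemOdd (a + 1) (k + 1) - elemOdd (a + 1) k) * (2 * k + 1) ^ 2 = elemOdd a k := by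
    intro k
    rw [elemOdd, elemOdd, Finset.sum_range_succ]
    push_cast
    field_simp
    ring
  simp only [this, sinRem]
  ring

lemma sinRem_zero (a K : ℕ) : sinRem a K 0 = 0 := by simp [sinRem]

lemma sinRemDeriv_zero (a K : ℕ) : sinRemDeriv a (K + 1) 0 = 0 := by
  rw [sinRemDeriv, Finset.sum_range_succ']
  cases a <;> simp [elemOdd, sinCoeff]

/-- If `f` and its derivative vanish at `0` and its second derivative lies in `[0, B]` on `[0, y]`,
then `f` lies in `[0, B y²]` on `[0, y]`. -/
lemma mem_Icc_of_second_deriv {f f' f'' : ℝ → ℝ} {y B : ℝ} (hf : ∀ x, HasDerivAt f (f' x) x)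
    (hf' : ∀ x, HasDerivAt f' (f'' x) x) (h0 : f 0 = 0) (h0' : f' 0 = 0)
    (hB : ∀ x ∈ Set.Icc 0 y, f'' x ∈ Set.Icc 0 B) :
    ∀ x ∈ Set.Icc 0 y, f x ∈ Set.Icc 0 (B * y ^ 2) := by
  have aux : ∀ {g g' : ℝ → ℝ} {C : ℝ}, (∀ x, HasDerivAt g (g' x) x) → g 0 = 0 →
      (∀ x ∈ Set.Icc 0 y, g' x ∈ Set.Icc 0 C) → ∀ x ∈ Set.Icc 0 y, g x ∈ Set.Icc 0 (C * y) := by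
    intro g g' C hg hg0 hC x hx
    obtain rfl | hx0 := hx.1.eq_or_lt
    · have := hC 0 hx
      rw [hg0]
      exact ⟨le_rfl, mul_nonneg (this.1.trans this.2) hx.2⟩
    · obtain ⟨c, hc, hceq⟩ := exists_hasDerivAt_eq_slope g g' hx0
        (fun z _ => (hg z).continuousAt.continuousWithinAt) (fun z _ => hg z)
      have hcm := hC c ⟨hc.1.le, hc.2.le.trans hx.2⟩
      have : g x = g' c * x := by rw [hceq, hg0]; field_simp; ring
      rw [this]
      exact ⟨mul_nonneg hcm.1 hx0.le,
        mul_le_mul hcm.2 hx.2 hx0.le (hcm.1.trans hcm.2)⟩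
  intro x hx
  have := aux hf h0 (aux hf' h0' hB) x hx
  rwa [mul_assoc, ← sq] at this

/-- The boundary term tends to `0`: polynomial growth against geometric decay. -/
lemma tendsto_sinErr (a : ℕ) {r : ℝ} (hr0 : 0 ≤ r) (hr : r < 1) :
    Tendsto (fun K : ℕ => elemOdd a K * sinCoeff K * (2 * K + 1) ^ 2 * r ^ (2 * K + 1)) atTop (𝓝 0) := by
  have hr2 : r ^ 2 < 1 := by nlinarith
  have t : ∀ n : ℕ, Tendsto (fun K : ℕ => (K : ℝ) ^ n * (r ^ 2) ^ K) atTop (𝓝 0) := fun n =>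
    tendsto_pow_const_mul_const_pow_of_lt_one n (by positivity) hr2
  have hlim := (((t (a + 2)).const_mul 4).add (((t (a + 1)).const_mul 4).add (t a))).mul_const r
  simp only [mul_zero, add_zero, zero_mul] at hlim
  refine squeeze_zero (fun K => ?_) (fun K => ?_) hlim
  · have := elemOdd_nonneg a K
    have := (sinCoeff_pos K).le
    positivity
  · have h1 : elemOdd a K * sinCoeff K ≤ (K : ℝ) ^ a * 1 :=
      mul_le_mul (elemOdd_le_pow a K) (sinCoeff_le_one K) (sinCoeff_pos K).le (by positivity)
    calc _ ≤ (K : ℝ) ^ a * 1 * (2 * K + 1) ^ 2 * r ^ (2 * K + 1) := by gcongr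
      _ = _ := by rw [← pow_mul]; ring

/-- On `[0, y]` with `y < π/2` the remainders are nonnegative and tend to `0` uniformly. The number
of terms is shifted by `a`, as each step of the induction uses up one term. -/
lemma exists_sinRem_bound (a : ℕ) {y : ℝ} (hy0 : 0 ≤ y) (hy : y < π / 2) :
    ∃ B : ℕ → ℝ, Tendsto B atTop (𝓝 0) ∧ ∀ K, ∀ x ∈ Set.Icc 0 y, sinRem a (K + 1 + a) x ∈ Set.Icc 0 (B K) := by
  have hs0 : 0 ≤ sin y := sin_nonneg_of_nonneg_of_le_pi hy0 (by linarith [pi_pos])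
  have hs1 : sin y < 1 := by
    rw [← sin_pi_div_two]
    exact sin_lt_sin_of_lt_of_le_pi_div_two (by linarith [pi_pos]) le_rfl hy
  have hE : ∀ a K, ∀ x ∈ Set.Icc 0 y, sinErr a K x ∈
      Set.Icc 0 (elemOdd a K * sinCoeff K * (2 * K + 1) ^ 2 * sin y ^ (2 * K + 1)) := by
    intro a K x hx
    have := elemOdd_nonneg a K
    have := (sinCoeff_pos K).le
    have h0 : 0 ≤ sin x := sin_nonneg_of_nonneg_of_le_pi hx.1 (by linarith [pi_pos, hx.2])
    have h1 : sin x ≤ sin y := sin_le_sin_of_le_of_le_pi_div_two (by linarith [pi_pos, hx.1]) hy.le hx.2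
    rw [sinErr]
    exact ⟨by positivity, by gcongr⟩
  induction a with
  | zero =>
    refine ⟨fun K => _, ?_, fun K => mem_Icc_of_second_deriv (hasDerivAt_sinRem 0 (K + 1))
      (hasDerivAt_sinRemDeriv_zero K) (sinRem_zero _ _) (sinRemDeriv_zero _ _) (hE 0 K)⟩
    simpa using (tendsto_sinErr 0 hs0 hs1).mul_const (y ^ 2)
  | succ a ih =>
    obtain ⟨B, hB, hBm⟩ := ih
    refine ⟨fun K => (B K + _) * y ^ 2, ?_, fun K =>
      mem_Icc_of_second_deriv (hasDerivAt_sinRem (a + 1) (K + 1 + a + 1))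
      (hasDerivAt_sinRemDeriv_succ a (K + 1 + a)) (sinRem_zero _ _) (sinRemDeriv_zero _ _)
      (fun x hx => ⟨add_nonneg (hBm K x hx).1 (hE (a + 1) (K + 1 + a) x hx).1,
        add_le_add (hBm K x hx).2 (hE (a + 1) (K + 1 + a) x hx).2⟩)⟩
    have h2 := (tendsto_sinErr (a + 1) hs0 hs1).comp (tendsto_add_atTop_nat (1 + a))
    have h3 := (hB.add h2).mul_const (y ^ 2)
    simp only [add_zero, zero_mul] at h3
    refine h3.congr fun K => ?_
    simp only [Function.comp, ← add_assoc]

/-- The expansion of `arcsin^{2a+1}/(2a+1)!` in powers of its argument, with `sin x` in place of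
the argument. -/
theorem hasSum_sin_pow (a : ℕ) {x : ℝ} (hx0 : 0 ≤ x) (hx : x < π / 2) :
    HasSum (fun k => elemOdd a k * sinCoeff k * sin x ^ (2 * k + 1))
      (x ^ (2 * a + 1) / (Nat.factorial (2 * a + 1) : ℝ)) := by
  have hs0 : 0 ≤ sin x := sin_nonneg_of_nonneg_of_le_pi hx0 (by linarith [pi_pos])
  rw [hasSum_iff_tendsto_nat_of_nonneg (fun k => mul_nonneg
    (mul_nonneg (elemOdd_nonneg a k) (sinCoeff_pos k).le) (by positivity))]
  obtain ⟨B, hB, hBm⟩ := exists_sinRem_bound a hx0 hx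
  rw [← tendsto_add_atTop_iff_nat (1 + a)]
  have h : Tendsto (fun K => sinRem a (K + (1 + a)) x) atTop (𝓝 0) :=
    squeeze_zero (fun K => by rw [← add_assoc]; exact (hBm K x ⟨hx0, le_rfl⟩).1)
      (fun K => by rw [← add_assoc]; exact (hBm K x ⟨hx0, le_rfl⟩).2) hB
  have := (tendsto_const_nhds (x := x ^ (2 * a + 1) / (Nat.factorial (2 * a + 1) : ℝ))).sub h
  simpa [sinRem] using this

/-! ### Moments of powers of the cosine -/

lemma continuous_pow_div_factorial (n : ℕ) :
    Continuous fun x : ℝ => x ^ n / (Nat.factorial n : ℝ) := by fun_prop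

/-- Integration by parts, twice, of the second derivative of `f` against `cos^{n+2}`. The boundary terms vanish: at `π/2` by
`cos`, at `0` by `sin` and by the hypothesis on the derivative of `f`. -/
lemma integral_mul_cos_pow {f f' f'' : ℝ → ℝ} (n : ℕ) (hf : ∀ x, HasDerivAt f (f' x) x)
    (hf' : ∀ x, HasDerivAt f' (f'' x) x) (hf'' : Continuous f'') (h0 : f' 0 = 0) :
    ∫ x in (0 : ℝ)..π / 2, f'' x * cos x ^ (n + 2) =
      (n + 2) * (n + 1) * (∫ x in (0 : ℝ)..π / 2, f x * cos x ^ n) -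
        (n + 2) ^ 2 * ∫ x in (0 : ℝ)..π / 2, f x * cos x ^ (n + 2) := by
  have hfc : Continuous f := continuous_iff_continuousAt.2 fun x => (hf x).continuousAt
  have hd : ∀ x ∈ Set.uIcc 0 (π / 2), HasDerivAt
      (fun x => f' x * cos x ^ (n + 2) + (n + 2) * (f x * (cos x ^ (n + 1) * sin x)))
      (f'' x * cos x ^ (n + 2) + ((n + 2) ^ 2 * (f x * cos x ^ (n + 2)) -
        (n + 2) * (n + 1) * (f x * cos x ^ n))) x := by
    intro x _
    have h1 := (hf' x).mul ((hasDerivAt_cos x).pow (n + 2))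
    have h2 := ((hf x).mul (((hasDerivAt_cos x).pow (n + 1)).mul (hasDerivAt_sin x))).const_mul
      ((n : ℝ) + 2)
    convert! h1.add h2 using 1
    have hs : sin x ^ 2 = 1 - cos x ^ 2 := sin_sq x
    simp only [Nat.add_sub_cancel, Nat.cast_add, Nat.cast_one, Nat.cast_ofNat, Pi.pow_apply, Pi.mul_apply,
      show n + 2 - 1 = n + 1 by omega]
    linear_combination ((n + 2) * (n + 1) * f x * cos x ^ n) * hs
  have hi := intervalIntegral.integral_eq_sub_of_hasDerivAt hd
    (by apply Continuous.intervalIntegrable; fun_prop)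
  rw [intervalIntegral.integral_add, intervalIntegral.integral_sub,
    intervalIntegral.integral_const_mul, intervalIntegral.integral_const_mul] at hi
  · simp [h0] at hi
    linear_combination hi
  all_goals apply Continuous.intervalIntegrable; fun_prop

/-- The moment `∫₀^{π/2} x^{2b}/(2b)! cos^{2k+1} x dx`. -/
noncomputable def cosMoment (b k : ℕ) : ℝ :=
  ∫ x in (0 : ℝ)..π / 2, x ^ (2 * b) / (Nat.factorial (2 * b) : ℝ) * cos x ^ (2 * k + 1)

lemma cosMoment_zero_succ (k : ℕ) :
    (2 * k + 3) * cosMoment 0 (k + 1) = (2 * k + 2) * cosMoment 0 k := by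
  have h := integral_mul_cos_pow (f := fun _ => 1) (f' := fun _ => 0) (f'' := fun _ => 0)
    (2 * k + 1) (fun x => hasDerivAt_const x _) (fun x => hasDerivAt_const x _) continuous_const rfl
  simp only [zero_mul, intervalIntegral.integral_zero, one_mul] at h
  push_cast at h
  have hk : (2 * (k : ℝ) + 3) ≠ 0 := by positivity
  simp only [cosMoment, mul_zero, pow_zero, Nat.factorial_zero, Nat.cast_one, div_one, one_mul,
    show 2 * (k + 1) + 1 = 2 * k + 1 + 2 by ring]
  apply mul_left_cancel₀ hk
  linear_combination h

lemma cosMoment_succ (b k : ℕ) :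
    cosMoment b (k + 1) = (2 * k + 3) * (2 * k + 2) * cosMoment (b + 1) k -
      (2 * k + 3) ^ 2 * cosMoment (b + 1) (k + 1) := by
  have h := integral_mul_cos_pow (2 * k + 1) (hasDerivAt_pow_div_factorial (2 * b + 1))
    (hasDerivAt_pow_div_factorial (2 * b)) (continuous_pow_div_factorial _) (by simp)
  simp only [cosMoment, show 2 * (k + 1) + 1 = 2 * k + 1 + 2 by ring, show 2 * (b + 1) = 2 * b + 1 + 1 by ring]
  rw [h]
  push_cast
  ring

lemma cosMoment_nonneg (b k : ℕ) : 0 ≤ cosMoment b k := by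
  refine intervalIntegral.integral_nonneg (by positivity) fun x hx => ?_
  have := hx.1
  have : 0 ≤ cos x := cos_nonneg_of_mem_Icc ⟨by linarith [pi_pos], hx.2⟩
  positivity

/-- The inequality `x cos x ≤ sin x` bounds higher moments by differences of Wallis integrals, so
that the measures `cos^{2k+1} x dx` concentrate at `0` after normalisation. -/
lemma cosMoment_succ_succ_le (b k : ℕ) :
    cosMoment (b + 1) (k + 1) ≤ (π / 2) ^ (2 * b) * (cosMoment 0 k - cosMoment 0 (k + 1)) := by
  simp only [cosMoment]
  rw [← intervalIntegral.integral_sub, ← intervalIntegral.integral_const_mul]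
  · refine intervalIntegral.integral_mono_on (by positivity) ?_ ?_ fun x hx => ?_
    · apply Continuous.intervalIntegrable; fun_prop
    · apply Continuous.intervalIntegrable; fun_prop
    · have hx0 := hx.1
      have hc : 0 ≤ cos x := cos_nonneg_of_mem_Icc ⟨by linarith [pi_pos], hx.2⟩
      have hxc : x * cos x ≤ sin x := by
        rcases hx.2.eq_or_lt with h | h
        · rw [h]; simp
        · have hc' : 0 < cos x := cos_pos_of_mem_Ioo ⟨by linarith [pi_pos], h⟩
          rw [← tan_mul_cos hc'.ne']
          exact mul_le_mul_of_nonneg_right (le_tan hx0 h) hc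
      have hsq : x ^ 2 * cos x ^ 2 ≤ 1 - cos x ^ 2 := by
        rw [← sin_sq, ← mul_pow]
        exact pow_le_pow_left₀ (by positivity) hxc 2
      have hfac : (1 : ℝ) ≤ (Nat.factorial (2 * (b + 1)) : ℝ) := by
        exact_mod_cast Nat.factorial_pos _
      calc x ^ (2 * (b + 1)) / (Nat.factorial (2 * (b + 1)) : ℝ) * cos x ^ (2 * (k + 1) + 1)
          ≤ x ^ (2 * (b + 1)) * cos x ^ (2 * (k + 1) + 1) := by
            gcongr
            exact div_le_self (by positivity) hfac
        _ = x ^ (2 * b) * ((x ^ 2 * cos x ^ 2) * cos x ^ (2 * k + 1)) := by ring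
        _ ≤ (π / 2) ^ (2 * b) * ((1 - cos x ^ 2) * cos x ^ (2 * k + 1)) := by
            gcongr
            exact hx.2
        _ = _ := by simp; ring
  all_goals apply Continuous.intervalIntegrable; fun_prop

/-- The moment `cosMoment b k` multiplied by `(2k+1)² c_k`, which makes it equal to `1` for
`b = 0`. -/
noncomputable def normMoment (b k : ℕ) : ℝ := sinCoeff k * (2 * k + 1) ^ 2 * cosMoment b k

lemma normMoment_nonneg (b k : ℕ) : 0 ≤ normMoment b k :=
  mul_nonneg (mul_nonneg (sinCoeff_pos k).le (by positivity)) (cosMoment_nonneg b k)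

lemma normMoment_zero (k : ℕ) : normMoment 0 k = 1 := by
  induction k with
  | zero => simp [normMoment, sinCoeff, cosMoment]
  | succ k ih =>
    rw [← ih, normMoment, normMoment, ← sinCoeff_succ_mul k]
    have := cosMoment_zero_succ k
    push_cast
    linear_combination (sinCoeff (k + 1) * (2 * k + 3)) * this

lemma normMoment_sub (b k : ℕ) :
    normMoment (b + 1) k - normMoment (b + 1) (k + 1) =
      1 / ((2 * (k + 1) + 1 : ℕ) : ℝ) ^ 2 * normMoment b (k + 1) := by
  rw [normMoment, normMoment, normMoment, ← sinCoeff_succ_mul, cosMoment_succ b k]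
  push_cast
  field_simp
  ring

lemma tendsto_normMoment (b : ℕ) : Tendsto (normMoment (b + 1)) atTop (𝓝 0) := by
  rw [← tendsto_add_atTop_iff_nat 1]
  have hlim : Tendsto (fun k : ℕ => (π / 2) ^ (2 * b) * (1 / ((k : ℝ) + 1))) atTop (𝓝 0) := by
    simpa using tendsto_one_div_add_atTop_nhds_zero_nat.const_mul ((π / 2) ^ (2 * b))
  refine squeeze_zero (fun k => normMoment_nonneg _ _) (fun k => ?_) hlim
  have h1 := cosMoment_succ_succ_le b k
  have h2 := cosMoment_zero_succ k
  have h3 := normMoment_zero (k + 1)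
  have h4 : cosMoment 0 k - cosMoment 0 (k + 1) = cosMoment 0 (k + 1) / (2 * k + 2) := by
    field_simp
    linear_combination -h2
  rw [h4] at h1
  have hs := (sinCoeff_pos (k + 1)).le
  rw [normMoment] at h3 ⊢
  calc _ ≤ sinCoeff (k + 1) * (2 * ((k + 1 : ℕ) : ℝ) + 1) ^ 2 *
        ((π / 2) ^ (2 * b) * (cosMoment 0 (k + 1) / (2 * k + 2))) := by gcongr
    _ = (sinCoeff (k + 1) * (2 * ((k + 1 : ℕ) : ℝ) + 1) ^ 2 * cosMoment 0 (k + 1)) *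
        ((π / 2) ^ (2 * b) * (1 / (2 * k + 2))) := by ring
    _ ≤ _ := by
      rw [h3, one_mul]
      gcongr
      · linarith
      · norm_num

lemma hasSum_normMoment (b k : ℕ) :
    HasSum (fun i => 1 / ((2 * (k + 1 + i) + 1 : ℕ) : ℝ) ^ 2 * normMoment b (k + 1 + i))
      (normMoment (b + 1) k) := by
  rw [hasSum_iff_tendsto_nat_of_nonneg
    (fun i => mul_nonneg (by positivity) (normMoment_nonneg _ _))]
  have h : ∀ n, ∑ i ∈ Finset.range n, 1 / ((2 * (k + 1 + i) + 1 : ℕ) : ℝ) ^ 2 *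
      normMoment b (k + 1 + i) = normMoment (b + 1) k - normMoment (b + 1) (n + k) := by
    intro n
    rw [add_comm n k]
    refine Eq.trans ?_ (Finset.sum_range_sub' (fun i => normMoment (b + 1) (k + i)) n)
    refine Finset.sum_congr rfl fun i _ => ?_
    rw [← add_assoc, normMoment_sub, show k + 1 + i = k + i + 1 by ring]
  simp only [h]
  simpa using ((tendsto_add_atTop_iff_nat k).2 (tendsto_normMoment b)).const_sub
    (normMoment (b + 1) k)

/-- The normalised moments are the sums of `∏ 1/(2j_i+1)²` over `k < j_1 < ⋯ < j_b`. -/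
lemma nestedSum_replicate_two (b k : ℕ) :
    nestedSum (List.replicate b 2) (k + 1) = ENNReal.ofReal (normMoment b k) := by
  induction b generalizing k with
  | zero => simp [nestedSum, normMoment_zero]
  | succ b ih =>
    have h := hasSum_normMoment b k
    rw [List.replicate_succ, nestedSum, ← h.tsum_eq, ENNReal.ofReal_tsum_of_nonneg
      (fun i => mul_nonneg (by positivity) (normMoment_nonneg _ _)) h.summable]
    refine (tailSum_eq_tsum_add _ (k + 1)).trans (tsum_congr fun i => ?_)
    rw [ih, ENNReal.ofReal_mul (by positivity), oddRecip]

lemma T_eq_tsum (a b : ℕ) :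
    T a b = ∑' k : ℕ, elemOdd a k * (1 / ((2 * k + 1 : ℕ) : ℝ) ^ 3 * normMoment b k) := by
  rw [T, mtv_eq_nestedSum, nestedSum_eq_tsum_elemOdd, ENNReal.tsum_toReal_eq]
  · refine tsum_congr fun k => ?_
    rw [nestedSum_replicate_two, oddRecip, ENNReal.toReal_mul, ENNReal.toReal_mul,
      ENNReal.toReal_ofReal (elemOdd_nonneg _ _), ENNReal.toReal_ofReal (by positivity),
      ENNReal.toReal_ofReal (normMoment_nonneg _ _)]
  · intro k
    rw [nestedSum_replicate_two]
    exact ENNReal.mul_ne_top ENNReal.ofReal_ne_top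
      (ENNReal.mul_ne_top ENNReal.ofReal_ne_top ENNReal.ofReal_ne_top)

lemma hasDerivAt_sub_pow_div_factorial (c : ℝ) (n : ℕ) (x : ℝ) :
    HasDerivAt (fun x : ℝ => (c - x) ^ (n + 1) / (Nat.factorial (n + 1) : ℝ))
      (-((c - x) ^ n / (Nat.factorial n : ℝ))) x := by
  simpa using (hasDerivAt_pow_div_factorial n (c - x)).comp_const_sub c x

/-- Integration by parts followed by the substitution of `π/2 - x` for `x`. -/
lemma integral_sin_pow_mul_cos_mul (b k : ℕ) :
    ∫ x in (0 : ℝ)..π / 2, sin x ^ (2 * k) * cos x *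
      ((π / 2 - x) ^ (2 * b + 1) / (Nat.factorial (2 * b + 1) : ℝ)) =
      cosMoment b k / (2 * k + 1) := by
  have hd : ∀ x ∈ Set.uIcc 0 (π / 2), HasDerivAt
      (fun x => sin x ^ (2 * k + 1) * ((π / 2 - x) ^ (2 * b + 1) / (Nat.factorial (2 * b + 1) : ℝ)))
      ((2 * k + 1) * (sin x ^ (2 * k) * cos x *
        ((π / 2 - x) ^ (2 * b + 1) / (Nat.factorial (2 * b + 1) : ℝ))) -
        (π / 2 - x) ^ (2 * b) / (Nat.factorial (2 * b) : ℝ) * sin x ^ (2 * k + 1)) x := by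
    intro x _
    have h := ((hasDerivAt_sin x).pow (2 * k + 1)).mul
      (hasDerivAt_sub_pow_div_factorial (π / 2) (2 * b) x)
    convert! h using 1
    simp only [Nat.add_sub_cancel, Nat.cast_add, Nat.cast_one, Nat.cast_ofNat, Nat.cast_mul, Pi.pow_apply]
    ring
  have hi := intervalIntegral.integral_eq_sub_of_hasDerivAt hd
    (by apply Continuous.intervalIntegrable; fun_prop)
  rw [intervalIntegral.integral_sub, intervalIntegral.integral_const_mul] at hi
  · have hsub : ∫ x in (0 : ℝ)..π / 2,
        (π / 2 - x) ^ (2 * b) / (Nat.factorial (2 * b) : ℝ) * sin x ^ (2 * k + 1) =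
        cosMoment b k := by
      have := intervalIntegral.integral_comp_sub_left (a := 0) (b := π / 2)
        (fun y => y ^ (2 * b) / (Nat.factorial (2 * b) : ℝ) * cos y ^ (2 * k + 1)) (π / 2)
      simpa [cosMoment, cos_pi_div_two_sub] using this
    rw [hsub] at hi
    simp at hi
    rw [eq_div_iff (by positivity)]
    linear_combination hi
  all_goals apply Continuous.intervalIntegrable; fun_prop

/-! ### The cotangent integral -/

/-- The function `x cot x`, written with `sinc` so that it takes the correct value `1` at `0`. -/
noncomputable def mulCot (x : ℝ) : ℝ := cos x / sinc x

lemma sinc_pos_of_mem {x : ℝ} (hx : x ∈ Set.Icc 0 (π / 2)) : 0 < sinc x := by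
  rcases hx.1.eq_or_lt with h | h
  · simp [← h]
  · rw [sinc_of_ne_zero h.ne']
    exact div_pos (sin_pos_of_pos_of_lt_pi h (by linarith [pi_pos, hx.2])) h

lemma continuousOn_mulCot : ContinuousOn mulCot (Set.uIcc 0 (π / 2)) := by
  rw [Set.uIcc_of_le (by positivity)]
  exact continuous_cos.continuousOn.div continuous_sinc.continuousOn
    fun x hx => (sinc_pos_of_mem hx).ne'

lemma mulCot_of_ne_zero {x : ℝ} (hx : x ≠ 0) : mulCot x = x * (cos x / sin x) := by
  rw [mulCot, sinc_of_ne_zero hx]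
  field_simp

/-- The integral `∫₀^{π/2} x^{2a+1}/(2a+1)! · (π/2 - x)^{2b+1}/(2b+1)! · cot x dx`, with one factor
`x` absorbed into `x cot x`. -/
noncomputable def cotIntegral (a b : ℕ) : ℝ :=
  ∫ x in (0 : ℝ)..π / 2, x ^ (2 * a) / (Nat.factorial (2 * a + 1) : ℝ) *
    ((π / 2 - x) ^ (2 * b + 1) / (Nat.factorial (2 * b + 1) : ℝ)) * mulCot x

lemma T_eq_cotIntegral (a b : ℕ) : T a b = cotIntegral a b := by
  set F : ℕ → ℝ → ℝ := fun k x => elemOdd a k * sinCoeff k * (sin x ^ (2 * k) * cos x *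
    ((π / 2 - x) ^ (2 * b + 1) / (Nat.factorial (2 * b + 1) : ℝ))) with hF
  have hpt : ∀ x ∈ Set.uIoc 0 (π / 2), HasSum (fun k => F k x)
      (x ^ (2 * a) / (Nat.factorial (2 * a + 1) : ℝ) *
        ((π / 2 - x) ^ (2 * b + 1) / (Nat.factorial (2 * b + 1) : ℝ)) * mulCot x) := by
    intro x hx
    rw [Set.uIoc_of_le (by positivity)] at hx
    -- The sine expansion fails at `π/2`, but there both sides vanish.
    rcases hx.2.eq_or_lt with h | h
    · have h0 : ∀ k, F k x = 0 := fun k => by simp [hF, h]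
      have h1 : mulCot x = 0 := by simp [mulCot, h]
      rw [h1, mul_zero, funext h0]
      exact hasSum_zero
    · have hs : sin x ≠ 0 := (sin_pos_of_pos_of_lt_pi hx.1 (by linarith [pi_pos])).ne'
      have := (hasSum_sin_pow a hx.1.le h).mul_right
        (cos x / sin x * ((π / 2 - x) ^ (2 * b + 1) / (Nat.factorial (2 * b + 1) : ℝ)))
      rw [mulCot_of_ne_zero hx.1.ne']
      convert! this using 1
      · funext k
        simp only [hF, pow_succ (sin x) (2 * k)]
        field_simp
      · ring
  have hnn : ∀ k, ∀ x ∈ Set.uIoc 0 (π / 2), 0 ≤ F k x := by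
    intro k x hx
    rw [Set.uIoc_of_le (by positivity)] at hx
    have h1 := elemOdd_nonneg a k
    have h2 := (sinCoeff_pos k).le
    have h3 : 0 ≤ sin x := sin_nonneg_of_nonneg_of_le_pi hx.1.le (by linarith [pi_pos, hx.2])
    have h4 : 0 ≤ cos x := cos_nonneg_of_mem_Icc ⟨by linarith [pi_pos, hx.1], hx.2⟩
    have h5 : 0 ≤ π / 2 - x := by linarith [hx.2]
    positivity
  -- The terms are nonnegative, so they serve as their own dominating series.
  have hsum : HasSum (fun k => ∫ x in (0 : ℝ)..π / 2, F k x) (cotIntegral a b) := by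
    refine intervalIntegral.hasSum_integral_of_dominated_convergence F (fun k => ?_) (fun k => ?_)
      ?_ ?_ ?_
    · have : Continuous (F k) := by simp only [hF]; fun_prop
      exact this.aestronglyMeasurable
    · exact MeasureTheory.ae_of_all _ fun x hx => by rw [Real.norm_of_nonneg (hnn k x hx)]
    · exact MeasureTheory.ae_of_all _ fun x hx => (hpt x hx).summable
    · have hc : ContinuousOn (fun x : ℝ => x ^ (2 * a) / (Nat.factorial (2 * a + 1) : ℝ) *
        ((π / 2 - x) ^ (2 * b + 1) / (Nat.factorial (2 * b + 1) : ℝ)) * mulCot x)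
          (Set.uIcc 0 (π / 2)) :=
        (Continuous.continuousOn (by fun_prop)).mul continuousOn_mulCot
      exact hc.intervalIntegrable.congr fun x hx => (hpt x hx).tsum_eq.symm
    · exact MeasureTheory.ae_of_all _ hpt
  rw [T_eq_tsum, ← hsum.tsum_eq]
  refine tsum_congr fun k => ?_
  simp only [hF]
  rw [intervalIntegral.integral_const_mul, integral_sin_pow_mul_cos_mul, normMoment]
  push_cast
  field_simp

/-! ### The power series of the cotangent -/

/-- The beta integral with integer exponents. -/
lemma integral_pow_mul_sub_pow (c : ℝ) (p q : ℕ) :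
    ∫ x in (0 : ℝ)..c, x ^ p / (Nat.factorial p : ℝ) * ((c - x) ^ q / (Nat.factorial q : ℝ)) =
      c ^ (p + q + 1) / (Nat.factorial (p + q + 1) : ℝ) := by
  induction q generalizing p with
  | zero =>
    have := intervalIntegral.integral_eq_sub_of_hasDerivAt (a := 0) (b := c)
      (fun x _ => hasDerivAt_pow_div_factorial p x)
      (by apply Continuous.intervalIntegrable; fun_prop)
    simpa using this
  | succ q ih =>
    have hi := intervalIntegral.integral_eq_sub_of_hasDerivAt (a := 0) (b := c)
      (fun x _ => (hasDerivAt_pow_div_factorial p x).mul (hasDerivAt_sub_pow_div_factorial c q x))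
      (by apply Continuous.intervalIntegrable; fun_prop)
    simp only [mul_neg] at hi
    rw [intervalIntegral.integral_add, intervalIntegral.integral_neg, ih (p + 1)] at hi
    · simp at hi
      rw [show p + (q + 1) + 1 = p + 1 + q + 1 by ring]
      linear_combination hi
    all_goals apply Continuous.intervalIntegrable; fun_prop

/-- The value `ζ(2n)` as a real number. -/
noncomputable def zetaEven (n : ℕ) : ℝ := (riemannZeta (2 * n)).re

lemma zetaEven_succ (n : ℕ) :
    riemannZeta (2 * (n + 1 : ℕ)) = ((∑' k : ℕ, (1 / ((k : ℝ) + 1)) ^ (2 * (n + 1)) : ℝ) : ℂ) := by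
  have h := zeta_nat_eq_tsum_of_gt_one (k := 2 * (n + 1)) (by omega)
  have hs : Summable fun k : ℕ => 1 / (k : ℝ) ^ (2 * (n + 1)) :=
    Real.summable_one_div_nat_pow.2 (by omega)
  have h2 := hs.tsum_eq_zero_add
  push_cast at h ⊢
  rw [h]
  have h3 : ∑' k : ℕ, 1 / (k : ℂ) ^ (2 * (n + 1)) =
      ((∑' k : ℕ, 1 / (k : ℝ) ^ (2 * (n + 1)) : ℝ) : ℂ) := by push_cast; rfl
  rw [h3, h2]
  push_cast
  simp

lemma zetaEven_ofReal (n : ℕ) : ((zetaEven n : ℝ) : ℂ) = riemannZeta (2 * n) := by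
  cases n with
  | zero =>
    rw [zetaEven]
    simp [riemannZeta_zero]
  | succ n => rw [zetaEven, zetaEven_succ, Complex.ofReal_re]

lemma zetaEven_zero : zetaEven 0 = -1 / 2 := by
  apply Complex.ofReal_injective
  rw [zetaEven_ofReal]
  simp [riemannZeta_zero]

lemma zetaEven_succ_eq (n : ℕ) :
    zetaEven (n + 1) = ∑' k : ℕ, (1 / ((k : ℝ) + 1)) ^ (2 * (n + 1)) := by
  rw [zetaEven, zetaEven_succ, Complex.ofReal_re]

/-- The partial fraction expansion of the cotangent on `(0, 1)`. -/
lemma mulCot_pi_mul {z : ℝ} (hz0 : 0 < z) (hz1 : z < 1) :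
    mulCot (π * z) = 1 + ∑' n : ℕ, z * (1 / (z - (n + 1)) + 1 / (z + (n + 1))) := by
  have hmem : (z : ℂ) ∈ Complex.integerComplement := by
    rw [Complex.mem_integerComplement_iff]
    rintro ⟨n, hn⟩
    have hn' : (n : ℝ) = z := by exact_mod_cast hn
    rw [← hn'] at hz0 hz1
    have h0 : 0 < n := by exact_mod_cast hz0
    have h1 : n < 1 := by exact_mod_cast hz1
    omega
  have h := cot_series_rep' hmem
  have hR : π * (cos (π * z) / sin (π * z)) - 1 / z =
      ∑' n : ℕ, (1 / (z - (n + 1)) + 1 / (z + (n + 1))) := by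
    apply Complex.ofReal_injective
    push_cast
    rw [← h, Complex.cot]
  rw [tsum_mul_left, ← hR, mulCot_of_ne_zero (by positivity)]
  field_simp
  ring

/-- Up to the factor `-z/2`, each pair of partial fractions of the cotangent is a geometric series
in `(z/(n+1))²`. -/
lemma hasSum_geom_cot {z : ℝ} (hz0 : 0 < z) (hz1 : z < 1) (n : ℕ) :
    HasSum (fun m : ℕ => (z * (1 / ((n : ℝ) + 1))) ^ (2 * (m + 1)))
      (-(z * (1 / (z - (n + 1)) + 1 / (z + (n + 1)))) / 2) := by
  have hn : (0 : ℝ) ≤ n := n.cast_nonneg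
  have hq : (z * (1 / ((n : ℝ) + 1))) < 1 := by
    rw [mul_one_div, div_lt_one (by positivity)]; linarith
  have hq0 : 0 ≤ (z * (1 / ((n : ℝ) + 1))) := by positivity
  have h := (hasSum_geometric_of_lt_one (sq_nonneg (z * (1 / ((n : ℝ) + 1)))) (by nlinarith)).mul_left
    ((z * (1 / ((n : ℝ) + 1))) ^ 2)
  convert! h using 1
  · funext m
    rw [← pow_mul, ← pow_add]; ring_nf
  · have h1 : z - (n + 1) ≠ 0 := by linarith
    have h2 : z + (n + 1) ≠ 0 := by positivity
    have h3 : 1 - (z * (1 / ((n : ℝ) + 1))) ^ 2 ≠ 0 := by nlinarith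
    have h4 : ((n : ℝ) + 1) ^ 2 - z ^ 2 ≠ 0 := by nlinarith
    have h5 : 1 - (z * (1 / ((n : ℝ) + 1))) ^ 2 = (((n : ℝ) + 1) ^ 2 - z ^ 2) / ((n : ℝ) + 1) ^ 2 := by
      field_simp
    rw [h5]
    field_simp
    ring

/-- The expansion `x cot x = -2 ∑ ζ(2n) (x/π)^{2n}` for `x = π z`; it includes the term `n = 0`
because `ζ(0) = -1/2`. -/
lemma hasSum_mulCot {z : ℝ} (hz0 : 0 < z) (hz1 : z < 1) :
    HasSum (fun n => -2 * zetaEven n * z ^ (2 * n)) (mulCot (π * z)) := by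
  have hs : Summable fun p : ℕ × ℕ => (z * (1 / ((p.1 : ℝ) + 1))) ^ (2 * (p.2 + 1)) := by
    rw [summable_prod_of_nonneg (fun p => by dsimp; positivity)]
    refine ⟨fun n => (hasSum_geom_cot hz0 hz1 n).summable, ?_⟩
    simp only [(hasSum_geom_cot hz0 hz1 _).tsum_eq]
    have hz : 0 < 1 - z := by linarith
    have hb : Summable fun n : ℕ => 1 / (1 - z) * (1 / ((n + 1 : ℕ) : ℝ) ^ 2) :=
      ((summable_nat_add_iff 1).2 (Real.summable_one_div_nat_pow.2 one_lt_two)).mul_left _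
    refine Summable.of_nonneg_of_le (fun n => ?_) (fun n => ?_) hb
    · exact (hasSum_geom_cot hz0 hz1 n).nonneg fun m => by positivity
    · have hn : (0 : ℝ) ≤ n := n.cast_nonneg
      have h1 : z - (n + 1) ≠ 0 := by linarith
      have h2 : z + (n + 1) ≠ 0 := by positivity
      have h4 : 0 < ((n : ℝ) + 1) ^ 2 - z ^ 2 := by nlinarith
      have e : -(z * (1 / (z - (n + 1)) + 1 / (z + (n + 1)))) / 2 = z ^ 2 / (((n : ℝ) + 1) ^ 2 - z ^ 2) := by
        field_simp
        ring
      rw [e, one_div_mul_one_div, div_le_div_iff₀ h4 (by positivity)]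
      push_cast
      have h5 : z ^ 2 ≤ z := by nlinarith
      have h6 : (1 : ℝ) ≤ ((n : ℝ) + 1) ^ 2 := one_le_pow₀ (by linarith)
      have h7 : z ^ 2 * ((1 - z) * ((n : ℝ) + 1) ^ 2) ≤ 1 * ((1 - z) * ((n : ℝ) + 1) ^ 2) :=
        mul_le_mul_of_nonneg_right (by linarith) (by positivity)
      nlinarith
  have hsw := hs.prod_symm
  have hA : ∀ m : ℕ, ∑' n : ℕ, (z * (1 / ((n : ℝ) + 1))) ^ (2 * (m + 1)) =
      zetaEven (m + 1) * z ^ (2 * (m + 1)) := by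
    intro m
    simp only [mul_pow z]
    rw [tsum_mul_left, zetaEven_succ_eq, mul_comm]
  have h1 : HasSum (fun m : ℕ => zetaEven (m + 1) * z ^ (2 * (m + 1)))
      (∑' n : ℕ, -(z * (1 / (z - (n + 1)) + 1 / (z + (n + 1)))) / 2) := by
    have h2 := hsw.prod.hasSum
    have h3 := Summable.tsum_comm (f := fun n m : ℕ => (z * (1 / ((n : ℝ) + 1))) ^ (2 * (m + 1))) hs
    simp only [(hasSum_geom_cot hz0 hz1 _).tsum_eq] at h3
    simp only [Prod.swap] at h2
    rw [h3] at h2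
    simpa only [hA] using h2
  rw [← hasSum_nat_add_iff' 1]
  have h3 := h1.mul_left (-2)
  rw [mulCot_pi_mul hz0 hz1]
  convert! h3 using 1
  · funext m; ring
  · rw [← tsum_mul_left]
    simp only [Finset.sum_range_one, zetaEven_zero, mul_zero, pow_zero]
    rw [show (-2 * (-1 / 2) * 1 : ℝ) = 1 by norm_num, add_sub_cancel_left]
    exact tsum_congr fun n => by ring

/-- Termwise integration of the power series of `x cot x`. -/
lemma cotIntegral_hasSum (a b : ℕ) :
    HasSum (fun n => -2 * zetaEven n / π ^ (2 * n) * ((Nat.factorial (2 * n + 2 * a) : ℝ) /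
      (Nat.factorial (2 * a + 1) : ℝ)) *
      ((π / 2) ^ (2 * n + 2 * a + 2 * b + 2) / (Nat.factorial (2 * n + 2 * a + 2 * b + 2) : ℝ)))
      (cotIntegral a b) := by
  set G : ℝ → ℝ := fun x => x ^ (2 * a) / (Nat.factorial (2 * a + 1) : ℝ) *
    ((π / 2 - x) ^ (2 * b + 1) / (Nat.factorial (2 * b + 1) : ℝ)) with hG
  have hGc : Continuous G := by simp only [hG]; fun_prop
  set F : ℕ → ℝ → ℝ := fun n x => G x * (-2 * zetaEven n * (x / π) ^ (2 * n)) with hF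
  -- On `(0, π/2]` the series is dominated by its values at the endpoint, where `x/π = 1/2`.
  have hhalf := (hasSum_mulCot (z := 1 / 2) (by norm_num) (by norm_num)).summable.abs
  have hsum : HasSum (fun n => ∫ x in (0 : ℝ)..π / 2, F n x) (cotIntegral a b) := by
    refine intervalIntegral.hasSum_integral_of_dominated_convergence
      (fun n x => |G x| * |-2 * zetaEven n * (1 / 2) ^ (2 * n)|) (fun n => ?_) (fun n => ?_)
      ?_ ?_ ?_
    · have : Continuous (F n) := by simp only [hF]; fun_prop
      exact this.aestronglyMeasurable
    · refine MeasureTheory.ae_of_all _ fun x hx => ?_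
      rw [Set.uIoc_of_le (by positivity)] at hx
      have h0 : 0 ≤ x / π := div_nonneg hx.1.le pi_pos.le
      have h1 : x / π ≤ 1 / 2 := by rw [div_le_iff₀ pi_pos]; linarith [hx.2]
      simp only [hF]
      rw [Real.norm_eq_abs, abs_mul, abs_mul (-2 * zetaEven n), abs_mul (-2 * zetaEven n),
        abs_of_nonneg (pow_nonneg h0 _), abs_of_nonneg (by positivity : (0:ℝ) ≤ (1 / 2) ^ (2 * n))]
      gcongr
    · exact MeasureTheory.ae_of_all _ fun x _ => hhalf.mul_left _
    · simp only [tsum_mul_left]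
      apply Continuous.intervalIntegrable; fun_prop
    · refine MeasureTheory.ae_of_all _ fun x hx => ?_
      rw [Set.uIoc_of_le (by positivity)] at hx
      have h0 : 0 < x / π := div_pos hx.1 pi_pos
      have h1 : x / π < 1 := by rw [div_lt_iff₀ pi_pos]; linarith [hx.2, pi_pos]
      have := (hasSum_mulCot h0 h1).mul_left (G x)
      rwa [mul_div_cancel₀ x pi_pos.ne'] at this
  convert! hsum using 1
  funext n
  have hbeta := integral_pow_mul_sub_pow (π / 2) (2 * n + 2 * a) (2 * b + 1)
  have hFe : ∀ x, F n x = -2 * zetaEven n / π ^ (2 * n) * ((Nat.factorial (2 * n + 2 * a) : ℝ) /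
      (Nat.factorial (2 * a + 1) : ℝ)) * (x ^ (2 * n + 2 * a) / (Nat.factorial (2 * n + 2 * a) : ℝ) *
      ((π / 2 - x) ^ (2 * b + 1) / (Nat.factorial (2 * b + 1) : ℝ))) := by
    intro x
    simp only [hF, hG, div_pow, pow_add x]
    field_simp
  simp only [hFe]
  rw [intervalIntegral.integral_const_mul, hbeta]
  ring_nf

end

/-- Lupu's second conjecture, in the factorial-ratio form:
`T(a,b) = -(π^{2a+2b+2}/(2^{2a+2b+1}(2a+1)!)) ∑_{n≥0} ζ(2n)(2n+2a)!/(2^{2n}(2n+2a+2b+2)!)`. -/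
theorem lupu_T_factorial_form (a b : ℕ) :
    (T a b : ℂ) = -((π : ℂ) ^ (2 * a + 2 * b + 2) /
        (2 ^ (2 * a + 2 * b + 1) * (Nat.factorial (2 * a + 1) : ℂ))) *
      ∑' n : ℕ, riemannZeta (2 * n) * (Nat.factorial (2 * n + 2 * a) : ℂ) /
        (2 ^ (2 * n) * (Nat.factorial (2 * n + 2 * a + 2 * b + 2) : ℂ)) := by
  rw [T_eq_cotIntegral, ← (cotIntegral_hasSum a b).tsum_eq, ← tsum_mul_left, Complex.ofReal_tsum]
  refine tsum_congr fun n => ?_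
  rw [← zetaEven_ofReal]
  have hπ : (π : ℂ) ≠ 0 := by exact_mod_cast pi_pos.ne'
  push_cast
  rw [div_pow, show 2 * n + 2 * a + 2 * b + 2 = 2 * n + (2 * a + 2 * b + 2) by ring,
    pow_add (π : ℂ), pow_add (2 : ℂ), show 2 * a + 2 * b + 2 = 2 * a + 2 * b + 1 + 1 by ring,
    pow_succ (2 : ℂ) (2 * a + 2 * b + 1)]
  field_simp
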